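/- arXiv:1906.00020 — 2 statements merged into one kernel-verified Lean document; each statement's English description precedes it below -/
import Mathlib

section
/- Let a, b, c, m, w be natural numbers such that A_a b + c = w < min{ A_a(b+1), A_0(A_a b) }. Then w ≡_k A_a b + c provided that either (1) m ≡_k A_a(b+1) and A_a(b+1) > A_a(⟨m⟩₋₁), or (2) m ≡_k A_a b + c' for some c'. -/
/-- The base-`k` Ackermann function `A_a(k, b)`:
`A_0(k, b) = k ^ b` and `A_{a+1}(k, b) = A_a^k(k, A_{a+1}(k, b-1))`,
with the auxiliary value `A_{a+1}(k, -1) = 1`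
(equivalently, `A_{a+1}(k, b) = (A_a^k)^[b+1] (1)`). -/
def Ack (k : ℕ) : ℕ → ℕ → ℕ
  | 0, b => k ^ b
  | a + 1, b => ((Ack k a)^[k])^[b + 1] 1

/-- `IsSandwich k m n a b ms` says that `(A_{a i}(k, b i))_{i=1}^n` is a
`k`-sandwiching sequence for `m`, with sandwiching values `(ms i)_{i=0}^n`:
`ms 0 = 0`; for each `i < n`, `A_{a (i+1)} (ms i) ≤ m < A_{a (i+1) + 1} (ms i)`,
`A_{a (i+1)} (b (i+1)) ≤ m < A_{a (i+1)} (b (i+1) + 1)`, and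
`ms (i+1) = A_{a (i+1)} (b (i+1))`; and `A_0 (ms n) > m`. -/
structure IsSandwich (k m n : ℕ) (a b ms : ℕ → ℕ) : Prop where
  ms_zero : ms 0 = 0
  idx_lo : ∀ i < n, Ack k (a (i + 1)) (ms i) ≤ m
  idx_hi : ∀ i < n, m < Ack k (a (i + 1) + 1) (ms i)
  arg_lo : ∀ i < n, Ack k (a (i + 1)) (b (i + 1)) ≤ m
  arg_hi : ∀ i < n, m < Ack k (a (i + 1)) (b (i + 1) + 1)
  ms_succ : ∀ i < n, ms (i + 1) = Ack k (a (i + 1)) (b (i + 1))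
  halt : m < Ack k 0 (ms n)

/-- `NF k m a b c` says that `m ≡_k A_a b + c`, i.e. `m` has `k`-normal form
`A_a b + c` (so `m = A_a b + c` and the `k`-sandwiching sequence of `m` ends
with the pair `(a, b)`). -/
def NF (k m a b c : ℕ) : Prop :=
  m = Ack k a b + c ∧
    ∃ n as bs ms, 1 ≤ n ∧ IsSandwich k m n as bs ms ∧ a = as n ∧ b = bs n

/-!
Since `A_{a+1} y` is a value of `A_a`, no value of `A_{a'}` with `a ≤ a'` lies strictly between
`A_a b` and `A_a (b + 1)`. The indices of a sandwiching sequence decrease, so if it ends with index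
`a`, then every upper bound in it is such a value: it holds for all numbers in
`[A_a b, A_a (b + 1))` as soon as it holds for some number that is at least `A_a b`. The lower
bounds, except those of the last step, only require a number to be at least the second-to-last
sandwiching value. Hence replacing the last argument by any `b` that is at least this value and has
`A_a b ≤ m` turns the sandwiching sequence of `m` into one of `w`.
-/

namespace Ack

variable {k a a' b y : ℕ}

theorem succ_eq_iterate (k a b : ℕ) : Ack k (a + 1) b = (Ack k a)^[k * (b + 1)] 1 := by
  rw [Ack, Function.iterate_mul]

theorem pos (hk : 0 < k) (a b : ℕ) : 0 < Ack k a b := by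
  induction a generalizing b with
  | zero => exact Nat.pow_pos hk
  | succ a ih =>
    rw [succ_eq_iterate]
    exact Function.Iterate.rec (0 < ·) one_pos (fun x _ => ih x) _

theorem lt_apply_of_strictMono (hk : 0 < k) (hmono : StrictMono (Ack k a)) (b : ℕ) :
    b < Ack k a b := by
  have := hmono.add_le_nat b 0
  have := pos hk a 0
  lia

variable (hk : 2 ≤ k)
include hk

theorem strictMono (a : ℕ) : StrictMono (Ack k a) := by
  induction a with
  | zero => exact pow_right_strictMono₀ hk
  | succ a ih =>
    intro x y hxy
    rw [succ_eq_iterate, succ_eq_iterate]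
    apply ih.strictMono_iterate_of_lt_map (lt_apply_of_strictMono (by lia) ih 1)
    gcongr

theorem lt_apply (a b : ℕ) : b < Ack k a b :=
  lt_apply_of_strictMono (by lia) (strictMono hk a) b

theorem strictMono_iterate_one (a : ℕ) : StrictMono fun n => (Ack k a)^[n] 1 :=
  (strictMono hk a).strictMono_iterate_of_lt_map (lt_apply hk a 1)

theorem exists_le_succ_eq (a y : ℕ) : ∃ x, y ≤ x ∧ Ack k (a + 1) y = Ack k a x := by
  obtain ⟨t, ht⟩ : ∃ t, k * (y + 1) = t + 1 := Nat.exists_eq_add_one.2 (by positivity)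
  refine ⟨(Ack k a)^[t] 1, ?_, ?_⟩
  · calc
      y ≤ t := by nlinarith
      _ ≤ (Ack k a)^[t] 1 := (strictMono_iterate_one hk a).le_apply
  · rw [succ_eq_iterate, ht, Function.iterate_succ_apply']

theorem exists_le_eq_of_le (ha : a ≤ a') (y : ℕ) : ∃ x, y ≤ x ∧ Ack k a' y = Ack k a x := by
  induction a', ha using Nat.le_induction generalizing y with
  | base => exact ⟨y, le_rfl, rfl⟩
  | succ a' _ ih =>
    obtain ⟨z, hyz, hz⟩ := exists_le_succ_eq hk a' y
    obtain ⟨x, hzx, hx⟩ := ih z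
    exact ⟨x, hyz.trans hzx, hz.trans hx⟩

theorem monotone_index (y : ℕ) : Monotone fun a => Ack k a y := by
  intro a a' ha
  obtain ⟨x, hyx, hx⟩ := exists_le_eq_of_le hk ha y
  exact ((strictMono hk a).monotone hyx).trans_eq hx.symm

theorem apply_add_one_le_of_apply_lt (ha : a ≤ a') (h : Ack k a b < Ack k a' y) :
    Ack k a (b + 1) ≤ Ack k a' y := by
  obtain ⟨x, -, hx⟩ := exists_le_eq_of_le hk ha y
  rw [hx] at h ⊢
  exact (strictMono hk a).monotone ((strictMono hk a).lt_iff_lt.1 h)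

end Ack

namespace IsSandwich

variable {k m n w b : ℕ} {as bs ms : ℕ → ℕ}

section
variable (hk : 2 ≤ k) (S : IsSandwich k m n as bs ms)
include hk S

theorem ms_le_arg {i : ℕ} (hi : i < n) : ms i ≤ bs (i + 1) :=
  Nat.lt_succ_iff.1 <|
    (Ack.strictMono hk (as (i + 1))).lt_iff_lt.1 ((S.idx_lo i hi).trans_lt (S.arg_hi i hi))

theorem ack_ms_le_ms_succ {i : ℕ} (hi : i < n) : Ack k (as (i + 1)) (ms i) ≤ ms (i + 1) := by
  rw [S.ms_succ i hi]
  exact (Ack.strictMono hk _).monotone (S.ms_le_arg hk hi)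

theorem strictMonoOn_ms : StrictMonoOn ms (Set.Iic n) :=
  strictMonoOn_of_lt_add_one Set.ordConnected_Iic fun i _ _ hi =>
    (Ack.lt_apply hk (as (i + 1)) (ms i)).trans_le (S.ack_ms_le_ms_succ hk hi)

theorem index_succ_lt {i : ℕ} (hi : i + 1 < n) : as (i + 2) < as (i + 1) := by
  have hi' : i < n := i.lt_succ_self.trans hi
  by_contra! hle
  have arg_lt_ms : bs (i + 1) < ms (i + 1) := S.ms_succ i hi' ▸ Ack.lt_apply hk _ _
  refine (S.arg_hi i hi').not_ge ?_
  calc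
    Ack k (as (i + 1)) (bs (i + 1) + 1)
      ≤ Ack k (as (i + 1)) (ms (i + 1)) := (Ack.strictMono hk _).monotone arg_lt_ms
    _ ≤ Ack k (as (i + 2)) (ms (i + 1)) := Ack.monotone_index hk _ hle
    _ ≤ m := S.idx_lo (i + 1) hi

theorem strictAntiOn_index : StrictAntiOn (fun i => as (i + 1)) (Set.Iio n) :=
  strictAntiOn_of_add_one_lt Set.ordConnected_Iio fun _ _ _ hi => S.index_succ_lt hk hi

end

theorem last_index_le (hk : 2 ≤ k) (S : IsSandwich k m (n + 1) as bs ms) {i : ℕ}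
    (hi : i < n + 1) : as (n + 1) ≤ as (i + 1) :=
  (S.strictAntiOn_index hk).antitoneOn hi n.lt_succ_self (Nat.lt_succ_iff.1 hi)

theorem update_last (hk : 2 ≤ k) (S : IsSandwich k m (n + 1) as bs ms) (hprev : ms n ≤ b)
    (hbm : Ack k (as (n + 1)) b ≤ m) (hbw : Ack k (as (n + 1)) b ≤ w)
    (hwb : w < Ack k (as (n + 1)) (b + 1)) (hhalt : w < Ack k 0 (Ack k (as (n + 1)) b)) :
    IsSandwich k w (n + 1) as (Function.update bs (n + 1) b)
      (Function.update ms (n + 1) (Ack k (as (n + 1)) b)) := by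
  have lt_ack_of_lt {a y : ℕ} (ha : as (n + 1) ≤ a) (hm : m < Ack k a y) : w < Ack k a y :=
    hwb.trans_le (Ack.apply_add_one_le_of_apply_lt hk ha (hbm.trans_lt hm))
  have ms_le {i : ℕ} (hi : i < n) : ms (i + 1) ≤ w :=
    calc
      ms (i + 1) ≤ ms n :=
        (S.strictMonoOn_ms hk).monotoneOn (Set.mem_Iic.2 (by lia)) (Set.mem_Iic.2 (by lia)) hi
      _ ≤ b := hprev
      _ ≤ Ack k (as (n + 1)) b := (Ack.lt_apply hk _ _).le
      _ ≤ w := hbw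
  have update_ms {i : ℕ} (hi : i < n + 1) (v : ℕ) : Function.update ms (n + 1) v i = ms i :=
    Function.update_of_ne hi.ne _ _
  have update_bs {i : ℕ} (hi : i < n) : Function.update bs (n + 1) b (i + 1) = bs (i + 1) :=
    Function.update_of_ne (by lia) _ _
  constructor
  case ms_zero => rw [update_ms n.succ_pos, S.ms_zero]
  case halt => rwa [Function.update_self]
  all_goals
    intro i hi
    rcases Nat.lt_succ_iff_lt_or_eq.1 hi with hin | rfl
  case idx_lo.inl =>
    rw [update_ms hi]
    exact (S.ack_ms_le_ms_succ hk hi).trans (ms_le hin)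
  case idx_lo.inr =>
    rw [update_ms hi]
    exact ((Ack.strictMono hk _).monotone hprev).trans hbw
  case idx_hi.inl | idx_hi.inr =>
    rw [update_ms hi]
    exact lt_ack_of_lt (Nat.le_succ_of_le (S.last_index_le hk hi)) (S.idx_hi i hi)
  case arg_lo.inl =>
    rw [update_bs hin, ← S.ms_succ i hi]
    exact ms_le hin
  case arg_hi.inl =>
    rw [update_bs hin]
    exact lt_ack_of_lt (S.last_index_le hk hi) (S.arg_hi i hi)
  case arg_lo.inr | arg_hi.inr => rwa [Function.update_self]
  case ms_succ.inl =>
    rw [update_bs hin, update_ms (Nat.succ_lt_succ hin), S.ms_succ i hi]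
  case ms_succ.inr => rw [Function.update_self, Function.update_self]

end IsSandwich

theorem stmt_7_general {k m b c n : ℕ} {as bs ms : ℕ → ℕ} (hk : 2 ≤ k)
    (S : IsSandwich k m (n + 1) as bs ms) (hprev : ms n ≤ b) (hbm : Ack k (as (n + 1)) b ≤ m)
    (hwb : Ack k (as (n + 1)) b + c < Ack k (as (n + 1)) (b + 1))
    (hhalt : Ack k (as (n + 1)) b + c < Ack k 0 (Ack k (as (n + 1)) b)) :
    NF k (Ack k (as (n + 1)) b + c) (as (n + 1)) b c :=
  ⟨rfl, n + 1, as, _, _, n.succ_pos,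
    S.update_last hk hprev hbm (Nat.le_add_right _ _) hwb hhalt, rfl,
    (Function.update_self (n + 1) b bs).symm⟩

theorem stmt_7 (k m w a b c : ℕ) (hk : 2 ≤ k)
    (hw : Ack k a b + c = w)
    (hw1 : w < Ack k a (b + 1)) (hw2 : w < Ack k 0 (Ack k a b))
    (hcond :
      (∃ n aseq bseq ms, 1 ≤ n ∧ IsSandwich k m n aseq bseq ms ∧
        aseq n = a ∧ bseq n = b + 1 ∧ m = Ack k a (b + 1) ∧
        Ack k a (ms (n - 1)) < Ack k a (b + 1)) ∨
      (∃ c', NF k m a b c')) :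
    NF k w a b c := by
  subst hw
  rcases hcond with ⟨n, as, bs, ms, hn, S, rfl, -, rfl, hlt⟩ |
    ⟨c', rfl, n, as, bs, ms, hn, S, rfl, rfl⟩
  all_goals obtain ⟨n, rfl⟩ := Nat.exists_eq_add_of_le' hn
  · have hprev : ms n ≤ b := Nat.lt_succ_iff.1 ((Ack.strictMono hk _).lt_iff_lt.1 hlt)
    exact stmt_7_general hk S hprev ((Ack.strictMono hk _).monotone b.le_succ) hw1 hw2
  · exact stmt_7_general hk S (S.ms_le_arg hk n.lt_succ_self) (Nat.le_add_right _ _) hw1 hw2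
end

section
/- Let m = A_a b with a, b > 0, and let s ∈ [1, b+1]. Then: (1) A_a b = A_{a−1}^{sk}(A_a(b−s)) (where A_a(−1) := 1 in the case s = b+1). (2) If moreover ℓ ∈ [1, k], c := A_{a−1}^ℓ(A_a(b−s)), m ≡_k A_a b, b = ⟨m⟩₋₁, and A_{a−1}(b) ≤ c < A_a b, then c is in k-normal form as written, i.e., c ≡_k A_{a−1}(A_{a−1}^{ℓ−1}(A_a(b−s))). -/
/-!
Every sandwiching value of `m = A_a b` except the last is at most `⟨m⟩₋₁ = b`, hence below any `c`
in `[A_{a-1} b, A_a b)`. So all steps of the sandwiching sequence of `m` except the last are also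
sandwiching steps for `c`. The next step for `c` then starts from `b`, so it has index `a - 1`, and
since `c` is itself a value of `A_{a-1}`, this step reaches `c` exactly and ends the sequence.
-/

section Ack

theorem lt_apply_of_strictMono_of_zero_lt {f : ℕ → ℕ} (hf : StrictMono f) (h0 : 0 < f 0) (x : ℕ) :
    x < f x := by
  have : x + f 0 ≤ f x := hf.add_le_nat x 0
  omega

theorem Ack_succ_eq_iterate (k a b : ℕ) : Ack k (a + 1) b = (Ack k a)^[(b + 1) * k] 1 := by
  rw [Ack, mul_comm, Function.iterate_mul]

theorem Ack_succ_sub_eq_iterate {b s : ℕ} (k a : ℕ) (hs : s ≤ b + 1) :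
    (if s ≤ b then Ack k (a + 1) (b - s) else 1) = (Ack k a)^[(b + 1 - s) * k] 1 := by
  split_ifs with hsb
  · rw [Ack_succ_eq_iterate, Nat.sub_add_comm hsb]
  · have hs_eq : s = b + 1 := by omega
    simp [hs_eq]

theorem Ack_succ_eq_iterate_sub {b s : ℕ} (k a : ℕ) (hs : s ≤ b + 1) :
    Ack k (a + 1) b =
      (Ack k a)^[s * k] (if s ≤ b then Ack k (a + 1) (b - s) else 1) := by
  rw [Ack_succ_sub_eq_iterate k a hs, ← Function.iterate_add_apply, ← add_mul,
    Nat.add_sub_cancel' hs, Ack_succ_eq_iterate]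

theorem Ack_pos {k : ℕ} (hk : 0 < k) (a b : ℕ) : 0 < Ack k a b := by
  induction a generalizing b with
  | zero => exact pow_pos hk b
  | succ a ih =>
    obtain ⟨j, hj⟩ := Nat.exists_eq_add_one.2 (Nat.mul_pos b.succ_pos hk)
    rw [Ack_succ_eq_iterate, hj, Function.iterate_succ_apply']
    exact ih _

theorem Ack_strictMono {k : ℕ} (hk : 1 < k) (a : ℕ) : StrictMono (Ack k a) := by
  have hk0 : 0 < k := by omega
  induction a with
  | zero => exact pow_right_strictMono₀ hk
  | succ a ih =>
    have one_lt : 1 < Ack k a 1 := lt_apply_of_strictMono_of_zero_lt ih (Ack_pos hk0 a 0) 1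
    intro x y hxy
    rw [Ack_succ_eq_iterate, Ack_succ_eq_iterate]
    exact ih.strictMono_iterate_of_lt_map one_lt
      (Nat.mul_lt_mul_of_pos_right (Nat.succ_lt_succ hxy) hk0)

theorem lt_Ack {k : ℕ} (hk : 1 < k) (a b : ℕ) : b < Ack k a b :=
  lt_apply_of_strictMono_of_zero_lt (Ack_strictMono hk a) (Ack_pos (by omega) a 0) b

end Ack

section Sandwich

/-- The conditions relating consecutive sandwiching values `x` and `y` of `m`, where `y = A_a b`:
the index `a` is determined by `x`, and the argument `b` by `a`. -/
structure IsSandwichStep (k m x a b y : ℕ) : Prop where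
  idx_lo : Ack k a x ≤ m
  idx_hi : m < Ack k (a + 1) x
  arg_lo : Ack k a b ≤ m
  arg_hi : m < Ack k a (b + 1)
  value_eq : y = Ack k a b

theorem isSandwich_iff {k m n : ℕ} {as bs ms : ℕ → ℕ} :
    IsSandwich k m n as bs ms ↔
      ms 0 = 0 ∧ (∀ i < n, IsSandwichStep k m (ms i) (as (i + 1)) (bs (i + 1)) (ms (i + 1))) ∧
        m < Ack k 0 (ms n) where
  mp h := ⟨h.ms_zero, fun i hi => ⟨h.idx_lo i hi, h.idx_hi i hi, h.arg_lo i hi, h.arg_hi i hi,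
    h.ms_succ i hi⟩, h.halt⟩
  mpr := fun ⟨hzero, hstep, hhalt⟩ => ⟨hzero, fun i hi => (hstep i hi).idx_lo,
    fun i hi => (hstep i hi).idx_hi, fun i hi => (hstep i hi).arg_lo,
    fun i hi => (hstep i hi).arg_hi, fun i hi => (hstep i hi).value_eq, hhalt⟩

variable {k m c n : ℕ}

namespace IsSandwichStep

variable {x a b y : ℕ}

theorem le_arg (hk : 1 < k) (h : IsSandwichStep k m x a b y) : x ≤ b :=
  Nat.lt_succ_iff.1 ((Ack_strictMono hk a).lt_iff_lt.1 (h.idx_lo.trans_lt h.arg_hi))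

theorem lt_value (hk : 1 < k) (h : IsSandwichStep k m x a b y) : x < y :=
  h.value_eq ▸ (h.le_arg hk).trans_lt (lt_Ack hk a b)

theorem of_value_le_of_le (hk : 1 < k) (h : IsSandwichStep k m x a b y) (hyc : y ≤ c)
    (hcm : c ≤ m) : IsSandwichStep k c x a b y where
  idx_lo := ((Ack_strictMono hk a).monotone (h.le_arg hk)).trans (h.value_eq ▸ hyc)
  idx_hi := hcm.trans_lt h.idx_hi
  arg_lo := h.value_eq ▸ hyc
  arg_hi := hcm.trans_lt h.arg_hi
  value_eq := h.value_eq

end IsSandwichStep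

theorem isSandwichStep_Ack {x a d : ℕ} (hk : 1 < k) (hlo : Ack k a x ≤ Ack k a d)
    (hhi : Ack k a d < Ack k (a + 1) x) : IsSandwichStep k (Ack k a d) x a d (Ack k a d) :=
  ⟨hlo, hhi, le_rfl, Ack_strictMono hk a d.lt_succ_self, rfl⟩

namespace IsSandwich

variable {as bs ms : ℕ → ℕ}

theorem step {i : ℕ} (h : IsSandwich k m n as bs ms) (hi : i < n) :
    IsSandwichStep k m (ms i) (as (i + 1)) (bs (i + 1)) (ms (i + 1)) :=
  (isSandwich_iff.1 h).2.1 i hi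

theorem strictMonoOn_values (hk : 1 < k) (h : IsSandwich k m n as bs ms) :
    StrictMonoOn ms (Set.Iic n) :=
  strictMonoOn_Iic_of_lt_succ fun _ hi => (h.step hi).lt_value hk

theorem update_last_s11 {a d : ℕ} (hk : 1 < k) (h : IsSandwich k m (n + 1) as bs ms) (hcm : c ≤ m)
    (hlast : IsSandwichStep k c (ms n) a d c) :
    IsSandwich k c (n + 1) (Function.update as (n + 1) a) (Function.update bs (n + 1) d)
      (Function.update ms (n + 1) c) := by
  refine isSandwich_iff.2 ⟨by simpa using h.ms_zero, fun i hi => ?_, by simpa using lt_Ack hk 0 c⟩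
  rcases (Nat.lt_succ_iff.1 hi).lt_or_eq with hin | rfl
  · have value_le : ms (i + 1) ≤ c :=
      calc ms (i + 1) ≤ ms n := (h.strictMonoOn_values hk).monotoneOn
            (Set.mem_Iic.2 (by omega)) (Set.mem_Iic.2 (by omega)) hin
        _ ≤ c := (hlast.lt_value hk).le
    simpa [hi.ne, hin.ne] using (h.step hi).of_value_le_of_le hk value_le hcm
  · simpa using hlast

theorem NF_Ack {a d : ℕ} (hk : 1 < k) (h : IsSandwich k m (n + 1) as bs ms)
    (hm : Ack k a d ≤ m) (hlo : Ack k a (ms n) ≤ Ack k a d)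
    (hhi : Ack k a d < Ack k (a + 1) (ms n)) : NF k (Ack k a d) a d 0 :=
  ⟨rfl, n + 1, _, _, _, n.succ_pos, h.update_last_s11 hk hm (isSandwichStep_Ack hk hlo hhi),
    by simp, by simp⟩

end IsSandwich

end Sandwich

theorem stmt_11 (k a b s : ℕ) (hk : 2 ≤ k) (ha : 0 < a) (hb : 0 < b)
    (hs1 : 1 ≤ s) (hs2 : s ≤ b + 1) :
    Ack k a b = (Ack k (a - 1))^[s * k] (if s ≤ b then Ack k a (b - s) else 1) ∧
      ∀ l n : ℕ, ∀ aseq bseq ms : ℕ → ℕ,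
        1 ≤ l → l ≤ k → 1 ≤ n → IsSandwich k (Ack k a b) n aseq bseq ms →
        aseq n = a → bseq n = b → b = ms (n - 1) →
        ∀ c, c = (Ack k (a - 1))^[l] (if s ≤ b then Ack k a (b - s) else 1) →
          Ack k (a - 1) b ≤ c → c < Ack k a b →
          NF k c (a - 1)
            ((Ack k (a - 1))^[l - 1] (if s ≤ b then Ack k a (b - s) else 1)) 0 := by
  obtain ⟨a, rfl⟩ := Nat.exists_eq_add_one.2 ha
  rw [Nat.add_sub_cancel]
  refine ⟨Ack_succ_eq_iterate_sub k a hs2, ?_⟩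
  intro l n aseq bseq ms hl _ hn hsandwich _ _ hb_eq c hc hlo hhi
  obtain ⟨l, rfl⟩ := Nat.exists_eq_add_one.2 hl
  obtain ⟨n, rfl⟩ := Nat.exists_eq_add_one.2 hn
  rw [Nat.add_sub_cancel] at hb_eq ⊢
  rw [Function.iterate_succ_apply'] at hc
  subst hc
  exact hsandwich.NF_Ack hk hhi.le (hb_eq ▸ hlo) (hb_eq ▸ hhi)
end
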